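/- arXiv:1904.10055 — 2 statements merged into one kernel-verified Lean document; each statement's English description precedes it below -/
import Mathlib

section
/- Let x₁, x₂ ∈ ℝ³, let γ₀ : [0,1] → ℝ³ be a C¹ path with γ₀(0) = x₁ and γ₀(1) = x₂, and for y ∈ ℝ³ set γ_y(u) = γ₀(u) + u(1−u)y. Let s : ℝ³ → ℝ be a compactly supported continuous function with ∫ s = q. For 0 < ε < 1/2 and a vector field g : ℝ³ → ℝ³ define ⟨b_ε, g⟩ = ∫_ε^{1−ε} ∫_{ℝ³} s(y) g(γ_y(u)) · (γ₀'(u) + (1−2u)y) dy du. Then for every C¹ function s' : ℝ³ → ℝ, lim_{ε→0} ⟨b_ε, grad s'⟩ = q·( s'(x₂) − s'(x₁) ). Equivalently, the distributions div b_ε converge, as ε → 0, to q·δ_{x₁} − q·δ_{x₂} when tested against C¹ functions. In particular, if s' vanishes at both x₁ and x₂, the limit is 0, so the limiting gauge-bridge field is divergence-free away from the two charge locations. -/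
/-!
With `F u = ∫ s(y) s'(γ_y(u)) dy`, the chain rule identifies the integrand
`s(y) (grad s')(γ_y(u)) · γ_y'(u)` with the `u`-derivative of `s(y) s'(γ_y(u))`. Since `s` has
compact support, everything happens over the compact set `tsupport s`, so one may differentiate
under the integral sign (`hasDerivAt_setIntegral_of_continuous`), and the pairing `⟨b_ε, grad s'⟩`
equals `F (1 - ε) - F ε` by the fundamental theorem of calculus. As `F` is continuous, this tends
to `F 1 - F 0`, and the factor `u (1 - u)` vanishes at both endpoints, so that `F 0 = q s'(x₁)` and
`F 1 = q s'(x₂)`.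
-/

open MeasureTheory Filter

/-- Partial derivative of a function on ℝ³ in the i-th coordinate direction. -/
noncomputable def pd (f : (Fin 3 → ℝ) → ℝ) (i : Fin 3) (x : Fin 3 → ℝ) : ℝ :=
  fderiv ℝ f x (Pi.single i 1)

/-- Gradient of a scalar function on ℝ³. -/
noncomputable def grad3 (h : (Fin 3 → ℝ) → ℝ) (x : Fin 3 → ℝ) : Fin 3 → ℝ :=
  fun i => pd h i x

/-- Euclidean inner product on ℝ³. -/
def dot3 (v w : Fin 3 → ℝ) : ℝ := ∑ i, v i * w i

/-- The gauge-bridge pairing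
`⟨b_ε, g⟩ = ∫_ε^{1−ε} ∫ s(y) g(γ_y(u)) · (γ₀'(u) + (1−2u)y) dy du`,
where `γ_y(u) = γ₀(u) + u(1−u)y`. -/
noncomputable def bridgePair (γ₀ : ℝ → Fin 3 → ℝ) (s : (Fin 3 → ℝ) → ℝ) (ε : ℝ)
    (g : (Fin 3 → ℝ) → Fin 3 → ℝ) : ℝ :=
  ∫ u in ε..(1 - ε),
    ∫ y, s y * dot3 (g (γ₀ u + (u * (1 - u)) • y)) (deriv γ₀ u + (1 - 2 * u) • y)

/-- The Euclidean pairing with the coordinate gradient is the Fréchet derivative. -/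
lemma dot3_grad3 (f : (Fin 3 → ℝ) → ℝ) (x v : Fin 3 → ℝ) :
    dot3 (grad3 f x) v = fderiv ℝ f x v := by
  conv_rhs => rw [pi_eq_sum_univ' v, map_sum]
  refine Finset.sum_congr rfl fun i _ => ?_
  rw [map_smul, smul_eq_mul, mul_comm]
  congr 2

/-- Differentiation under the integral sign over a compact set, for a jointly continuous
derivative. The dominating function is a constant: the maximum of the derivative on
`[u - 1, u + 1] × K`. -/
lemma hasDerivAt_setIntegral_of_continuous {f f' : ℝ → (Fin 3 → ℝ) → ℝ}
    (hf : ∀ u, Continuous (f u)) (hf' : Continuous (Function.uncurry f'))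
    (hd : ∀ u y, HasDerivAt (fun v => f v y) (f' u y) u)
    {K : Set (Fin 3 → ℝ)} (hK : IsCompact K) (u : ℝ) :
    HasDerivAt (fun v => ∫ y in K, f v y) (∫ y in K, f' u y) u := by
  obtain ⟨C, hC⟩ := ((isCompact_closedBall u 1).prod hK).exists_bound_of_continuousOn
    hf'.continuousOn
  have hf'u : Continuous (f' u) := hf'.comp (by fun_prop : Continuous fun y => (u, y))
  refine (hasDerivAt_integral_of_dominated_loc_of_deriv_le (bound := fun _ => C)
    (Metric.closedBall_mem_nhds u one_pos)
    (Eventually.of_forall fun v => (hf v).aestronglyMeasurable)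
    ((hf u).continuousOn.integrableOn_compact hK) hf'u.aestronglyMeasurable ?_ ?_ ?_).2
  · filter_upwards [ae_restrict_mem hK.measurableSet] with y hy v hv
    exact hC (v, y) ⟨hv, hy⟩
  · exact integrableOn_const hK.measure_lt_top.ne
  · exact Eventually.of_forall fun y v _ => hd v y

/-- The distributions `div b_ε` converge, as `ε → 0`, to `q δ_{x₁} − q δ_{x₂}` when
tested against C¹ functions: `lim_{ε→0} ⟨b_ε, grad s'⟩ = q (s'(x₂) − s'(x₁))`.
In particular the limit is `0` whenever `s'` vanishes at both charge locations. -/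
theorem bridgePair_grad_tendsto (x₁ x₂ : Fin 3 → ℝ) (γ₀ : ℝ → Fin 3 → ℝ)
    (hγ : ContDiff ℝ 1 γ₀) (hγ0 : γ₀ 0 = x₁) (hγ1 : γ₀ 1 = x₂)
    (s : (Fin 3 → ℝ) → ℝ) (hs : Continuous s) (hsc : HasCompactSupport s)
    (q : ℝ) (hq : ∫ y, s y = q) :
    ∀ s' : (Fin 3 → ℝ) → ℝ, ContDiff ℝ 1 s' →
      Tendsto (fun ε => bridgePair γ₀ s ε (grad3 s')) (nhdsWithin 0 (Set.Ioi 0))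
        (nhds (q * (s' x₂ - s' x₁))) ∧
      (s' x₁ = 0 → s' x₂ = 0 →
        Tendsto (fun ε => bridgePair γ₀ s ε (grad3 s')) (nhdsWithin 0 (Set.Ioi 0))
          (nhds 0)) := by
  intro s' hs'
  have key : Tendsto (fun ε => bridgePair γ₀ s ε (grad3 s')) (nhdsWithin 0 (Set.Ioi 0))
      (nhds (q * (s' x₂ - s' x₁))) := by
    set K := tsupport s with hKdef
    have hK : IsCompact K := hsc
    have hs0 : ∀ y, y ∉ K → s y = 0 := fun y hy => image_eq_zero_of_notMem_tsupport hy
    have hγc : Continuous γ₀ := hγ.continuous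
    have hγ' : Continuous (deriv γ₀) := hγ.continuous_deriv le_rfl
    have hs'c : Continuous s' := hs'.continuous
    have hs'd : Continuous (fderiv ℝ s') := hs'.continuous_fderiv one_ne_zero
    set f : ℝ → (Fin 3 → ℝ) → ℝ := fun u y => s y * s' (γ₀ u + (u * (1 - u)) • y) with hf
    set f' : ℝ → (Fin 3 → ℝ) → ℝ := fun u y =>
      s y * fderiv ℝ s' (γ₀ u + (u * (1 - u)) • y) (deriv γ₀ u + (1 - 2 * u) • y) with hf'
    have hfc : ∀ u, Continuous (f u) := fun u => by fun_prop
    have hf'c : Continuous (Function.uncurry f') := by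
      refine (hs.comp continuous_snd).mul (Continuous.clm_apply (hs'd.comp ?_) ?_) <;> fun_prop
    have hd : ∀ u y, HasDerivAt (fun v => f v y) (f' u y) u := by
      intro u y
      have h1 : HasDerivAt γ₀ (deriv γ₀ u) u :=
        (hγ.differentiable one_ne_zero u).hasDerivAt
      have h2 : HasDerivAt (fun v : ℝ => v * (1 - v)) (1 - 2 * u) u := by
        convert! (hasDerivAt_id u).mul ((hasDerivAt_id u).const_sub 1) using 1
        simp only [id]
        ring
      have h3 := h1.add (h2.smul_const y)
      have h4 := (hs'.differentiable one_ne_zero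
        (γ₀ u + (u * (1 - u)) • y)).hasFDerivAt.comp_hasDerivAt u h3
      exact h4.const_mul (s y)
    have hF := hasDerivAt_setIntegral_of_continuous hfc hf'c hd hK
    have hF'c : Continuous fun u => ∫ y in K, f' u y :=
      continuous_parametric_integral_of_continuous hf'c hK
    have hFc : Continuous fun u => ∫ y in K, f u y :=
      continuous_iff_continuousAt.2 fun u => (hF u).continuousAt
    have hpair : ∀ ε, bridgePair γ₀ s ε (grad3 s') =
        (∫ y in K, f (1 - ε) y) - ∫ y in K, f ε y := by
      intro ε
      rw [← intervalIntegral.integral_eq_sub_of_hasDerivAt (fun u _ => hF u)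
        (hF'c.intervalIntegrable _ _)]
      refine intervalIntegral.integral_congr fun u _ => ?_
      simp only [dot3_grad3]
      exact (setIntegral_eq_integral_of_forall_compl_eq_zero fun y hy => by
        simp [hs0 y hy]).symm
    have hsK : ∫ y in K, s y = q :=
      (setIntegral_eq_integral_of_forall_compl_eq_zero hs0).trans hq
    have h0 : ∫ y in K, f 0 y = q * s' x₁ := by
      simp [hf, hγ0, integral_mul_const, hsK]
    have h1 : ∫ y in K, f 1 y = q * s' x₂ := by
      simp [hf, hγ1, integral_mul_const, hsK]
    have hlim : Tendsto (fun ε => (∫ y in K, f (1 - ε) y) - ∫ y in K, f ε y) (nhds 0)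
        (nhds (q * (s' x₂ - s' x₁))) := by
      have hc : Continuous fun ε => (∫ y in K, f (1 - ε) y) - ∫ y in K, f ε y :=
        (hFc.comp (by fun_prop : Continuous fun ε : ℝ => 1 - ε)).sub hFc
      simpa only [sub_zero, h0, h1, ← mul_sub] using hc.tendsto 0
    simpa only [hpair] using hlim.mono_left nhdsWithin_le_nhds
  exact ⟨key, fun h₁ h₂ => by simpa [h₁, h₂] using key⟩
end

section
/- Let x₁, x₂ ∈ ℝ³, let γ₀ : [0,1] → ℝ³ be a C¹ path with γ₀(0) = x₁, γ₀(1) = x₂, γ_y(u) = γ₀(u) + u(1−u)y, and let s : ℝ³ → ℝ be a compactly supported continuous function with ∫ s = q. For 0 < ε < 1/2 define ⟨b_ε, g⟩ = ∫_ε^{1−ε} ∫_{ℝ³} s(y) g(γ_y(u)) · (γ₀'(u) + (1−2u)y) dy du. Let s' : ℝ³ → ℝ be a smooth compactly supported function with ∫ s' = 1 and supp s' ⊆ closedBall(0, r), let B ⊂ ℝ³ be a rectangular box with s'_B(x) = ∫_B s'(x − y) dy, and assume that for each i ∈ {1, 2} either closedBall(xᵢ, r) ⊆ B or closedBall(xᵢ,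 r) ∩ B = ∅. Then lim_{ε→0} ( −⟨b_ε, grad s'_B⟩ ) = q·(χ₁ − χ₂), where χᵢ = 1 if closedBall(xᵢ, r) ⊆ B and χᵢ = 0 otherwise. In particular the smeared flux of the gauge bridge through the boundary of B equals q if B encloses only x₁, −q if B encloses only x₂, and 0 if B encloses both or neither of the charge locations (Gauss' law for the gauge bridge). -/
/-!
Write `F = s'_B`, the convolution of the indicator of the box `B` with `s'`; it is smooth. By the
chain rule the integrand of `⟨b_ε, grad F⟩` is `s y * d/du F(γ_y u)`, hence its integral over `y`
is the derivative of `G u = ∫ s y * F(γ_y u) dy` (differentiation under the integral sign,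
`hasDerivAt_smearedPath`). The fundamental theorem of calculus gives
`⟨b_ε, grad F⟩ = G (1 - ε) - G ε`, and continuity of `G` gives the limit `G 1 - G 0`. All the paths
`γ_y` have the same endpoints `x₁`, `x₂`, so `G 0 = q * F x₁` and `G 1 = q * F x₂`. Finally
`F xᵢ` is `1` or `0` according to whether the ball of radius `r` around `xᵢ` lies in `B` or misses
it, since `y ↦ s' (xᵢ - y)` is supported in that ball and has total integral `1`.
-/

open MeasureTheory Filter Classical

/-- ℝ³ with the Euclidean norm. -/
abbrev E3 := EuclideanSpace ℝ (Fin 3)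

/-- Partial derivative in the i-th coordinate direction. -/
noncomputable def pdE (f : E3 → ℝ) (i : Fin 3) (x : E3) : ℝ :=
  fderiv ℝ f x (EuclideanSpace.single i 1)

/-- Gradient of a scalar function on ℝ³. -/
noncomputable def gradE (f : E3 → ℝ) (x : E3) : E3 :=
  (WithLp.equiv 2 (Fin 3 → ℝ)).symm (fun i => pdE f i x)

/-- Euclidean inner product on ℝ³. -/
def dotE (v w : E3) : ℝ := ∑ i, v i * w i

/-- The rectangular box `[a₁,b₁] × [a₂,b₂] × [a₃,b₃]` in ℝ³. -/
def boxSet (a b : Fin 3 → ℝ) : Set E3 := {x | ∀ i, a i ≤ x i ∧ x i ≤ b i}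

/-- The box-mollified function `s'_B(x) = ∫_B s'(x − y) dy`. -/
noncomputable def boxMollE (s' : E3 → ℝ) (a b : Fin 3 → ℝ) (x : E3) : ℝ :=
  ∫ y in boxSet a b, s' (x - y)

/-- The gauge-bridge pairing
`⟨b_ε, g⟩ = ∫_ε^{1−ε} ∫ s(y) g(γ_y(u)) · (γ₀'(u) + (1−2u)y) dy du`,
where `γ_y(u) = γ₀(u) + u(1−u)y`. -/
noncomputable def bridgePairE (γ₀ : ℝ → E3) (s : E3 → ℝ) (ε : ℝ) (g : E3 → E3) : ℝ :=
  ∫ u in ε..(1 - ε),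
    ∫ y, s y * dotE (g (γ₀ u + (u * (1 - u)) • y)) (deriv γ₀ u + (1 - 2 * u) • y)

theorem isCompact_boxSet (a b : Fin 3 → ℝ) : IsCompact (boxSet a b) := by
  have h : boxSet a b = (PiLp.homeomorph 2 (fun _ : Fin 3 => ℝ)) ⁻¹' Set.Icc a b := by
    ext x
    simp [boxSet, Set.mem_Icc, Pi.le_def, forall_and]
    exact Iff.rfl
  rw [h, Homeomorph.isCompact_preimage]
  exact isCompact_Icc

theorem contDiff_boxMollE (s' : E3 → ℝ) (hs' : ContDiff ℝ (⊤ : ℕ∞) s')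
    (hs'c : HasCompactSupport s') (a b : Fin 3 → ℝ) : ContDiff ℝ 1 (boxMollE s' a b) := by
  have hB := isCompact_boxSet a b
  have h : boxMollE s' a b = convolution ((boxSet a b).indicator fun _ => (1 : ℝ)) s'
      (ContinuousLinearMap.lsmul ℝ ℝ) volume := by
    ext x
    rw [convolution_lsmul, boxMollE, ← integral_indicator hB.measurableSet]
    congr 1
    ext y
    by_cases hy : y ∈ boxSet a b <;> simp [hy]
  rw [h]
  refine hs'c.contDiff_convolution_right _ ?_ (hs'.of_le (by exact_mod_cast le_top))
  refine Integrable.locallyIntegrable ?_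
  rw [integrable_indicator_iff hB.measurableSet]
  exact integrableOn_const hB.measure_lt_top.ne

theorem dotE_gradE (F : E3 → ℝ) (x v : E3) : dotE (gradE F x) v = fderiv ℝ F x v := by
  have hv : v = ∑ i, v i • EuclideanSpace.single i (1 : ℝ) := by
    ext j
    simp [Finset.sum_apply, Pi.single_apply]
  conv_rhs => rw [hv, map_sum]
  simp [dotE, gradE, pdE, mul_comm]

/-- The value of `s'_B` at a point whose `r`-ball is inside the box or disjoint from it. The
function `y ↦ s' (x - y)` vanishes off the ball, so the integral over the box is either the full
integral of `s'` or zero. -/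
theorem boxMollE_eq_ite (s' : E3 → ℝ) (h1 : ∫ x, s' x = 1) (r : ℝ)
    (hss' : tsupport s' ⊆ Metric.closedBall 0 r) (a b : Fin 3 → ℝ) (x : E3)
    (hx : Metric.closedBall x r ⊆ boxSet a b ∨ Metric.closedBall x r ∩ boxSet a b = ∅) :
    boxMollE s' a b x = if Metric.closedBall x r ⊆ boxSet a b then (1 : ℝ) else 0 := by
  have hz : ∀ y, y ∉ Metric.closedBall x r → s' (x - y) = 0 := by
    intro y hy
    by_contra hne
    have hmem := hss' (subset_tsupport s' hne)
    apply hy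
    rw [mem_closedBall_zero_iff] at hmem
    rwa [Metric.mem_closedBall, dist_comm, dist_eq_norm]
  split_ifs with h
  · rw [boxMollE, setIntegral_eq_integral_of_forall_compl_eq_zero
      (fun y hy => hz y fun hy' => hy (h hy')), integral_sub_left_eq_self s' volume x, h1]
  · have hd := hx.resolve_left h
    refine setIntegral_eq_zero_of_forall_eq_zero fun y hy => hz y fun hy' => ?_
    have hm : y ∈ Metric.closedBall x r ∩ boxSet a b := ⟨hy', hy⟩
    rwa [hd] at hm

/-- A parametric integral against a compactly supported density is continuous in the parameter. -/
theorem continuous_integral_density (s : E3 → ℝ) (hs : Continuous s) (hsc : HasCompactSupport s)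
    (f : ℝ → E3 → ℝ) (hf : Continuous f.uncurry) :
    Continuous fun u => ∫ y, s y * f u y := by
  have h : (fun u => ∫ y, s y * f u y) = fun u => ∫ y in tsupport s, s y * f u y := by
    ext u
    refine (setIntegral_eq_integral_of_forall_compl_eq_zero fun y hy => ?_).symm
    rw [image_eq_zero_of_notMem_tsupport hy, zero_mul]
  rw [h]
  refine continuous_parametric_integral_of_continuous (f := fun u y => s y * f u y) ?_ hsc
  exact (hs.comp continuous_snd).mul hf

/-- Differentiation under the integral sign: the inner integral of the gauge-bridge pairing with
`grad F` is the derivative of the smeared value of `F` along the paths `γ_y`. -/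
theorem hasDerivAt_smearedPath (γ₀ : ℝ → E3) (hγ : ContDiff ℝ 1 γ₀) (s : E3 → ℝ)
    (hs : Continuous s) (hsc : HasCompactSupport s) (F : E3 → ℝ) (hF : ContDiff ℝ 1 F)
    (hcont : Continuous (Function.uncurry fun (u : ℝ) (y : E3) =>
      fderiv ℝ F (γ₀ u + (u * (1 - u)) • y) (deriv γ₀ u + (1 - 2 * u) • y))) (u₀ : ℝ) :
    HasDerivAt (fun u => ∫ y, s y * F (γ₀ u + (u * (1 - u)) • y))
      (∫ y, s y * fderiv ℝ F (γ₀ u₀ + (u₀ * (1 - u₀)) • y)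
        (deriv γ₀ u₀ + (1 - 2 * u₀) • y)) u₀ := by
  have hγc := hγ.continuous
  have hFc := hF.continuous
  obtain ⟨C, hC⟩ := ((isCompact_closedBall u₀ 1).prod hsc).exists_bound_of_continuousOn
    hcont.continuousOn
  have hs_int : Integrable s := hs.integrable_of_hasCompactSupport hsc
  refine (hasDerivAt_integral_of_dominated_loc_of_deriv_le
    (F := fun u y => s y * F (γ₀ u + (u * (1 - u)) • y))
    (F' := fun u y => s y * fderiv ℝ F (γ₀ u + (u * (1 - u)) • y)
      (deriv γ₀ u + (1 - 2 * u) • y))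
    (bound := fun y => ‖s y‖ * C)
    (Metric.closedBall_mem_nhds u₀ one_pos) ?_ ?_ ?_ ?_ ?_ ?_).2
  · exact Eventually.of_forall fun u => Continuous.aestronglyMeasurable (by fun_prop)
  · refine Continuous.integrable_of_hasCompactSupport (by fun_prop) ?_
    exact hsc.mul_right
  · exact (hs.mul (hcont.comp (Continuous.prodMk_right u₀))).aestronglyMeasurable
  · refine Eventually.of_forall fun y u hu => ?_
    rw [norm_mul]
    by_cases hy : y ∈ tsupport s
    · exact mul_le_mul_of_nonneg_left (hC (u, y) ⟨hu, hy⟩) (norm_nonneg _)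
    · simp [image_eq_zero_of_notMem_tsupport hy]
  · exact hs_int.norm.mul_const C
  · refine Eventually.of_forall fun y u _ => HasDerivAt.const_mul _ ?_
    have hγ' : HasDerivAt γ₀ (deriv γ₀ u) u :=
      (hγ.differentiable one_ne_zero u).hasDerivAt
    have hu : HasDerivAt (fun u : ℝ => u * (1 - u)) (1 - 2 * u) u := by
      refine ((hasDerivAt_id' u).mul ((hasDerivAt_id' u).const_sub 1)).congr_deriv ?_
      ring
    exact ((hF.differentiable one_ne_zero _).hasFDerivAt).comp_hasDerivAt u
      (hγ'.add (hu.smul_const y))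

/-- Gauss' law for the gauge bridge: the smeared flux of the gauge bridge through the
boundary of a box `B` converges, as `ε → 0`, to `q` if `B` encloses only `x₁`, to `−q`
if `B` encloses only `x₂`, and to `0` if `B` encloses both or neither charge location. -/
theorem gauss_law_gauge_bridge (x₁ x₂ : E3) (γ₀ : ℝ → E3) (hγ : ContDiff ℝ 1 γ₀)
    (hγ0 : γ₀ 0 = x₁) (hγ1 : γ₀ 1 = x₂)
    (s : E3 → ℝ) (hs : Continuous s) (hsc : HasCompactSupport s)
    (q : ℝ) (hq : ∫ y, s y = q)
    (s' : E3 → ℝ) (hs' : ContDiff ℝ (⊤ : ℕ∞) s') (hs'c : HasCompactSupport s')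
    (h1 : ∫ x, s' x = 1) (r : ℝ) (hss' : tsupport s' ⊆ Metric.closedBall 0 r)
    (a b : Fin 3 → ℝ) (hab : ∀ i, a i ≤ b i)
    (hx1 : Metric.closedBall x₁ r ⊆ boxSet a b ∨
           Metric.closedBall x₁ r ∩ boxSet a b = ∅)
    (hx2 : Metric.closedBall x₂ r ⊆ boxSet a b ∨
           Metric.closedBall x₂ r ∩ boxSet a b = ∅) :
    Tendsto (fun ε => -(bridgePairE γ₀ s ε (gradE (boxMollE s' a b))))
      (nhdsWithin 0 (Set.Ioi 0))
      (nhds (q * ((if Metric.closedBall x₁ r ⊆ boxSet a b then (1:ℝ) else 0) -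
                  (if Metric.closedBall x₂ r ⊆ boxSet a b then (1:ℝ) else 0)))) := by
  set F := boxMollE s' a b with hFdef
  have hF : ContDiff ℝ 1 F := contDiff_boxMollE s' hs' hs'c a b
  have hcont : Continuous (Function.uncurry fun (u : ℝ) (y : E3) =>
      fderiv ℝ F (γ₀ u + (u * (1 - u)) • y) (deriv γ₀ u + (1 - 2 * u) • y)) := by
    have hγc := hγ.continuous
    have hγd := hγ.continuous_deriv le_rfl
    have hFd := hF.continuous_fderiv one_ne_zero
    refine Continuous.clm_apply (hFd.comp ?_) ?_ <;> fun_prop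
  set G : ℝ → ℝ := fun u => ∫ y, s y * F (γ₀ u + (u * (1 - u)) • y) with hG
  have hGd := hasDerivAt_smearedPath γ₀ hγ s hs hsc F hF hcont
  have hGc : Continuous G := continuous_iff_continuousAt.2 fun u => (hGd u).continuousAt
  have hpair : ∀ ε, bridgePairE γ₀ s ε (gradE F) = G (1 - ε) - G ε := by
    intro ε
    simp only [bridgePairE, dotE_gradE]
    exact intervalIntegral.integral_eq_sub_of_hasDerivAt (fun u _ => hGd u)
      ((continuous_integral_density s hs hsc _ hcont).intervalIntegrable _ _)
  have hG0 : G 0 = q * F x₁ := by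
    simp [hG, hγ0, integral_mul_const, hq]
  have hG1 : G 1 = q * F x₂ := by
    simp [hG, hγ1, integral_mul_const, hq]
  rw [← boxMollE_eq_ite s' h1 r hss' a b x₁ hx1, ← boxMollE_eq_ite s' h1 r hss' a b x₂ hx2]
  simp only [hpair]
  have hlim : Continuous fun ε => -(G (1 - ε) - G ε) := by fun_prop
  have ht := (hlim.tendsto 0).mono_left (nhdsWithin_le_nhds (s := Set.Ioi 0))
  convert ht using 2
  rw [sub_zero, hG0, hG1]
  ring
end
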